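/- Termination function gradient theorem for the soft robust loss (Theorem 3): In the finite rectangular option MDP, let the termination functions be a parameterized family β : ℝ → O → S → ℝ (for each θ ∈ ℝ, 0 ≤ β θ ω s ≤ 1), while πΩ, πo, K, c, w do not depend on θ, and for each θ let (QΩ θ, Qo θ, Qβ θ, VΩ θ) satisfy the rectangular Bellman system with termination functions β θ; let Pγ θ, Pγ^k θ and the averaged value functions Q̄Ω θ, V̄Ω θ be defined accordingly. Define the shifted discounted weighting m^k θ ((s₀,ω₀),(s'',ω')) := ∑_{s'} Pγ^k θ ((s₀,ω₀),(s',ω')) * ∑_a πo ω' s' a * γ * K̄ s' a s'' and d̄' θ ((s₀,ω₀),(s,ω)) := ∑_{k=0}^∞ m^k θ ((s₀,ω₀),(s,ω)) (this series converges since ∑_{(s,ω)} m^k θ ((s₀,ω₀),(s,ω)) = γ^{k+1} and 0 ≤ γ < 1). Fix θ₀ ∈ ℝ and assume that for every ω, s the map θ ↦ β θ ω s is differentiable at θ₀ and for every s, ω, p the map θ ↦ QΩ θ s ω p is differentiable at θ₀. Then for every initial state–option pair (s₀, ω₀): ∑_p w p * deriv (θ ↦ QΩ θ s₀ ω₀ p)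 θ₀ = ∑_{(s,ω)} d̄' θ₀ ((s₀,ω₀),(s,ω)) * (deriv (θ ↦ β θ ω s) θ₀) * (V̄Ω θ₀ s − Q̄Ω θ₀ s ω). -/

import Mathlib

open scoped Classical

open Finset

variable {S O A P : Type*} [Fintype S] [Fintype O] [Fintype A] [Fintype P]

/-- The average transition kernel `K̄ s a s' = ∑ p, w p * K p s a s'`. -/
noncomputable def Kbar (w : P → ℝ) (K : P → S → A → S → ℝ) (s : S) (a : A) (s' : S) : ℝ :=
  ∑ p, w p * K p s a s'

/-- One-step discounted state–option kernel `Pγ`. -/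
noncomputable def Pgam (w : P → ℝ) (K : P → S → A → S → ℝ) (γ : ℝ)
    (πo : O → S → A → ℝ) (β : O → S → ℝ) (πΩ : S → O → ℝ)
    (x y : S × O) : ℝ :=
  ∑ a, πo x.2 x.1 a * γ * Kbar w K x.1 a y.1 *
    ((1 - β x.2 y.1) * (if y.2 = x.2 then 1 else 0) + β x.2 y.1 * πΩ y.1 y.2)

/-- k-step iterates `Pγ^k` of the one-step discounted state–option kernel. -/
noncomputable def PgamIter (w : P → ℝ) (K : P → S → A → S → ℝ) (γ : ℝ)
    (πo : O → S → A → ℝ) (β : O → S → ℝ) (πΩ : S → O → ℝ) :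
    ℕ → S × O → S × O → ℝ
  | 0, x, y => if y = x then 1 else 0
  | (k + 1), x, y => ∑ z, Pgam w K γ πo β πΩ x z * PgamIter w K γ πo β πΩ k z y

/-!
The averaged option value `Q̄ θ` solves `Q̄ θ = r + Pγ θ *ᵥ Q̄ θ`. Subtracting the equations at `θ`
and `θ₀` and inverting `1 - Pγ θ₀` by its Neumann series gives an exact difference formula,
`Q̄ θ x - Q̄ θ₀ x = ∑ q, d̄' θ₀ x q * (β θ q - β θ₀ q) * (V̄ θ q - Q̄ θ q)`.
Every summand has a factor vanishing at `θ₀`, so continuity of `Q̄` and `V̄` is enough to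
differentiate it, and continuity follows from that of the matrix inverse. Each `QΩ θ s ω p` is an
affine expression in `Q̄ θ` with coefficients affine in `β θ`, hence differentiable as well.
-/

open Matrix Topology

section NeumannSeries

variable {R n : Type*} [Ring R] [TopologicalSpace R] [IsTopologicalRing R] [T2Space R]

theorem isUnit_one_sub_of_summable_pow {a : R} (ha : Summable (a ^ ·)) : IsUnit (1 - a) :=
  ⟨⟨1 - a, ∑' k, a ^ k, ha.one_sub_mul_tsum_pow, ha.tsum_pow_mul_one_sub⟩, rfl⟩

theorem fixedPoint_sub_eq_tsum_pow_mulVec [Fintype n] [DecidableEq n] {A B : Matrix n n R}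
    {r u v : n → R} (hA : Summable (A ^ ·)) (hu : u = r + A *ᵥ u) (hv : v = r + B *ᵥ v) :
    v - u = (∑' k, A ^ k) *ᵥ ((B - A) *ᵥ v) := by
  have hdiff : (1 - A) *ᵥ (v - u) = (B - A) *ᵥ v := by
    have hu' : u - A *ᵥ u = r := sub_eq_of_eq_add hu
    have hv' : v - B *ᵥ v = r := sub_eq_of_eq_add hv
    rw [mulVec_sub, sub_mulVec, sub_mulVec, sub_mulVec, one_mulVec, one_mulVec, hu', ← hv']
    abel
  rw [← hdiff, mulVec_mulVec, hA.tsum_pow_mul_one_sub, one_mulVec]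

end NeumannSeries

theorem continuousAt_fixedPoint_of_isUnit_one_sub {𝕜 X n : Type*} [Field 𝕜] [TopologicalSpace 𝕜]
    [IsTopologicalDivisionRing 𝕜] [T1Space 𝕜] [TopologicalSpace X] [Fintype n] [DecidableEq n]
    {A : X → Matrix n n 𝕜} {r : n → 𝕜} {v : X → n → 𝕜} {x₀ : X} (hA : ContinuousAt A x₀)
    (hunit : IsUnit (1 - A x₀)) (hv : ∀ᶠ x in 𝓝 x₀, v x = r + A x *ᵥ v x) :
    ContinuousAt v x₀ := by
  have hM : ContinuousAt (fun x => 1 - A x) x₀ := continuousAt_const.sub hA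
  have hdet₀ : (1 - A x₀).det ≠ 0 := ((isUnit_iff_isUnit_det _).1 hunit).ne_zero
  have hdet : ∀ᶠ x in 𝓝 x₀, (1 - A x).det ≠ 0 :=
    (continuous_id.matrix_det.continuousAt.comp hM).eventually_ne hdet₀
  have hinv : ContinuousAt (fun x => (1 - A x)⁻¹) x₀ := by
    refine (continuousAt_matrix_inv (1 - A x₀) ?_).tendsto.comp hM
    simpa only [Ring.inverse_eq_inv'] using continuousAt_inv₀ hdet₀
  have hsolve : v =ᶠ[𝓝 x₀] fun x => (1 - A x)⁻¹ *ᵥ r := by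
    filter_upwards [hv, hdet] with x hvx hdetx
    have hr : (1 - A x) *ᵥ v x = r := by
      rw [sub_mulVec, one_mulVec]
      exact sub_eq_of_eq_add hvx
    rw [← hr, mulVec_mulVec, nonsing_inv_mul _ hdetx.isUnit, one_mulVec]
  refine ContinuousAt.congr ?_ hsolve.symm
  exact (continuous_id.matrix_mulVec continuous_const).continuousAt.comp hinv

theorem summable_pow_of_sum_norm_le {R n : Type*} [NormedRing R] [CompleteSpace R]
    [Fintype n] [DecidableEq n] {A : Matrix n n R} {γ : ℝ} (hγ0 : 0 ≤ γ) (hγ1 : γ < 1)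
    (hA : ∀ i, ∑ j, ‖A i j‖ ≤ γ) : Summable (A ^ ·) := by
  let : NormedRing (Matrix n n R) := Matrix.linftyOpNormedRing
  -- The uniformity of the operator norm agrees with the product one only by unfolding.
  have : @CompleteSpace (Matrix n n R) PseudoMetricSpace.toUniformSpace :=
    inferInstanceAs (CompleteSpace (n → n → R))
  have hnorm : ‖A‖ < 1 := by
    lift γ to NNReal using hγ0
    rw [linfty_opNorm_def]
    refine lt_of_le_of_lt (NNReal.coe_le_coe.2 (Finset.sup_le fun i _ => ?_)) hγ1
    simpa only [← NNReal.coe_le_coe, NNReal.coe_sum, coe_nnnorm] using hA i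
  exact summable_geometric_of_norm_lt_one hnorm

theorem hasFDerivAt_sub_mul_of_continuousAt {𝕜 E : Type*} [NontriviallyNormedField 𝕜]
    [NormedAddCommGroup E] [NormedSpace 𝕜 E] {f g : E → 𝕜} {f' : E →L[𝕜] 𝕜} {x₀ : E}
    (hf : HasFDerivAt f f' x₀) (hg : ContinuousAt g x₀) :
    HasFDerivAt (fun x => (f x - f x₀) * g x) (g x₀ • f') x₀ := by
  have hmain : (fun x => (f x - f x₀ - f' (x - x₀)) * g x₀) =o[𝓝 x₀] fun x => x - x₀ := by
    simpa only [mul_comm] using hf.isLittleO.const_mul_left (g x₀)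
  have hrest : (fun x => (f x - f x₀) * (g x - g x₀)) =o[𝓝 x₀] fun x => x - x₀ := by
    have hg' : (fun x => g x - g x₀) =o[𝓝 x₀] fun _ => (1 : ℝ) :=
      (Asymptotics.isLittleO_one_iff ℝ).2 (tendsto_sub_nhds_zero_iff.2 hg)
    simpa using (hf.isBigO_sub.norm_right.mul_isLittleO hg')
  refine .of_isLittleO ((hmain.add hrest).congr_left fun x => ?_)
  simp only [sub_self, zero_mul, _root_.smul_apply, smul_eq_mul]
  ring

/-- The discounted probability of moving from state `x.1` to state `y` while option `x.2` runs,
before it is decided whether that option terminates; one factor of `Pγ` and of `d̄'`. -/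
noncomputable def discountedStep (w : P → ℝ) (K : P → S → A → S → ℝ) (γ : ℝ)
    (πo : O → S → A → ℝ) (x : S × O) (y : S) : ℝ :=
  ∑ a, πo x.2 x.1 a * γ * Kbar w K x.1 a y

/-- The shifted discounted weighting `d̄'`: the weight with which `q.1` is entered under option
`q.2`, before it is decided whether that option terminates. -/
noncomputable def shiftedOccupancy (w : P → ℝ) (K : P → S → A → S → ℝ) (γ : ℝ)
    (πo : O → S → A → ℝ) (β : O → S → ℝ) (πΩ : S → O → ℝ) (x q : S × O) : ℝ :=
  ∑' k, ∑ s', PgamIter w K γ πo β πΩ k x (s', q.2) * discountedStep w K γ πo (s', q.2) q.1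

/-- The averaged option value `Q̄Ω`, as a vector indexed by state–option pairs. -/
noncomputable def meanOptionValue (w : P → ℝ) (QΩ : S → O → P → ℝ) (x : S × O) : ℝ :=
  ∑ p, w p * QΩ x.1 x.2 p

/-- The averaged state value `V̄Ω`. -/
noncomputable def meanStateValue (w : P → ℝ) (VΩ : S → P → ℝ) (s : S) : ℝ :=
  ∑ p, w p * VΩ s p

/-- The averaged one-step cost of running an option, which is the constant term of the averaged
Bellman equation. -/
noncomputable def meanOptionCost (w : P → ℝ) (c : P → S → A → ℝ) (πo : O → S → A → ℝ)
    (x : S × O) : ℝ :=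
  ∑ p, w p * ∑ a, πo x.2 x.1 a * c p x.1 a

/-- The rectangular Bellman system for one fixed termination function `β`. The cost may depend on
the model parameter. -/
structure IsBellmanSolution (γ : ℝ) (c : P → S → A → ℝ) (K : P → S → A → S → ℝ) (w : P → ℝ)
    (πΩ : S → O → ℝ) (πo : O → S → A → ℝ) (β : O → S → ℝ) (QΩ : S → O → P → ℝ)
    (Qo : S → O → A → P → ℝ) (Qβ : S → O → P → ℝ) (VΩ : S → P → ℝ) : Prop where
  optionValue_eq : ∀ s ω p, QΩ s ω p = ∑ a, πo ω s a * Qo s ω a p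
  actionValue_eq : ∀ s ω a p,
    Qo s ω a p = c p s a + γ * ∑ s', K p s a s' * (∑ p', w p' * Qβ s' ω p')
  arrivalValue_eq : ∀ s ω p, Qβ s ω p = (1 - β ω s) * QΩ s ω p + β ω s * VΩ s p
  stateValue_eq : ∀ s p, VΩ s p = ∑ ω, πΩ s ω * QΩ s ω p

section Kernel

variable {w : P → ℝ} {K : P → S → A → S → ℝ} {γ : ℝ} {πo : O → S → A → ℝ} {β : O → S → ℝ}
  {πΩ : S → O → ℝ}

theorem PgamIter_eq_pow (k : ℕ) :
    PgamIter w K γ πo β πΩ k = of (Pgam w K γ πo β πΩ) ^ k := by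
  induction k with
  | zero =>
    ext x y
    simp only [PgamIter, pow_zero, one_apply, eq_comm]
  | succ k ih =>
    ext x y
    simp only [PgamIter, ih, pow_succ', mul_apply, of_apply]

theorem summable_Pgam_pow_iff :
    Summable (of (Pgam w K γ πo β πΩ) ^ ·) ↔
      ∀ x y, Summable fun k => PgamIter w K γ πo β πΩ k x y := by
  simp only [PgamIter_eq_pow]
  exact Pi.summable.trans (forall_congr' fun _ => Pi.summable)

theorem tsum_Pgam_pow_apply (hsum : ∀ x y, Summable fun k => PgamIter w K γ πo β πΩ k x y)
    (x y : S × O) :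
    (∑' k, of (Pgam w K γ πo β πΩ) ^ k) x y = ∑' k, PgamIter w K γ πo β πΩ k x y := by
  have hpow := summable_Pgam_pow_iff.2 hsum
  simp only [PgamIter_eq_pow]
  exact (congrFun (tsum_apply hpow) y).trans (tsum_apply (Pi.summable.1 hpow x))

omit [Fintype S] [Fintype O] in
theorem Pgam_eq_discountedStep_mul (x y : S × O) :
    Pgam w K γ πo β πΩ x y = discountedStep w K γ πo x y.1 *
      ((1 - β x.2 y.1) * (if y.2 = x.2 then 1 else 0) + β x.2 y.1 * πΩ y.1 y.2) := by
  rw [Pgam, ← sum_mul, discountedStep]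

theorem Pgam_mulVec (f : S × O → ℝ) (x : S × O) :
    (of (Pgam w K γ πo β πΩ) *ᵥ f) x = ∑ s', discountedStep w K γ πo x s' *
      ((1 - β x.2 s') * f (s', x.2) + β x.2 s' * ∑ ω, πΩ s' ω * f (s', ω)) := by
  simp only [mulVec, dotProduct, of_apply, Pgam_eq_discountedStep_mul, Fintype.sum_prod_type]
  refine sum_congr rfl fun s' _ => ?_
  simp only [mul_assoc, ← mul_sum, add_mul, sum_add_distrib, ite_mul, one_mul, zero_mul,
    sum_ite_eq', mem_univ, if_true]

theorem Pgam_sub_mulVec (β' : O → S → ℝ) (f : S × O → ℝ) (x : S × O) :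
    ((of (Pgam w K γ πo β' πΩ) - of (Pgam w K γ πo β πΩ)) *ᵥ f) x =
      ∑ s', discountedStep w K γ πo x s' *
        ((β' x.2 s' - β x.2 s') * (∑ ω, πΩ s' ω * f (s', ω) - f (s', x.2))) := by
  rw [sub_mulVec, Pi.sub_apply, Pgam_mulVec, Pgam_mulVec, ← sum_sub_distrib]
  exact sum_congr rfl fun s' _ => by ring

omit [Fintype S] [Fintype O] in
theorem continuousAt_Pgam {X : Type*} [TopologicalSpace X] {β : X → O → S → ℝ} {θ₀ : X}
    (hβ : ∀ ω s, ContinuousAt (fun θ => β θ ω s) θ₀) :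
    ContinuousAt (fun θ => of (Pgam w K γ πo (β θ) πΩ)) θ₀ := by
  refine continuousAt_pi.2 fun x => continuousAt_pi.2 fun y => ?_
  simp only [of_apply, Pgam_eq_discountedStep_mul]
  exact continuousAt_const.mul (((continuousAt_const.sub (hβ _ _)).mul continuousAt_const).add
    ((hβ _ _).mul continuousAt_const))

theorem tsum_Pgam_pow_mulVec_discountedStep
    (hsum : ∀ x y, Summable fun k => PgamIter w K γ πo β πΩ k x y) (g : S × O → ℝ) (x : S × O) :
    ((∑' k, of (Pgam w K γ πo β πΩ) ^ k) *ᵥ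
        fun z => ∑ s', discountedStep w K γ πo z s' * g (s', z.2)) x =
      ∑ q, shiftedOccupancy w K γ πo β πΩ x q * g q := by
  have hocc (q : S × O) : shiftedOccupancy w K γ πo β πΩ x q =
      ∑ s', (∑' k, PgamIter w K γ πo β πΩ k x (s', q.2)) *
        discountedStep w K γ πo (s', q.2) q.1 := by
    rw [shiftedOccupancy, Summable.tsum_finsetSum fun s' _ => (hsum x (s', q.2)).mul_right _]
    simp only [tsum_mul_right]
  simp only [mulVec, dotProduct, tsum_Pgam_pow_apply hsum, hocc, Fintype.sum_prod_type_right,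
    mul_sum, sum_mul]
  refine sum_congr rfl fun ω _ => ?_
  rw [sum_comm]
  simp only [mul_assoc]

omit [Fintype S] [Fintype A] in
theorem Kbar_nonneg (hK0 : ∀ p s a s', 0 ≤ K p s a s') (hw0 : ∀ p, 0 ≤ w p) (s : S) (a : A)
    (s' : S) : 0 ≤ Kbar w K s a s' :=
  sum_nonneg fun p _ => mul_nonneg (hw0 p) (hK0 p s a s')

omit [Fintype A] in
theorem sum_Kbar (hK1 : ∀ p s a, ∑ s', K p s a s' = 1) (hw1 : ∑ p, w p = 1) (s : S) (a : A) :
    ∑ s', Kbar w K s a s' = 1 := by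
  simp only [Kbar]
  rw [sum_comm]
  simp only [← mul_sum, hK1, mul_one, hw1]

omit [Fintype S] [Fintype O] in
theorem discountedStep_nonneg (hγ0 : 0 ≤ γ) (hK0 : ∀ p s a s', 0 ≤ K p s a s')
    (hw0 : ∀ p, 0 ≤ w p) (hπo0 : ∀ ω s a, 0 ≤ πo ω s a) (x : S × O) (s' : S) :
    0 ≤ discountedStep w K γ πo x s' :=
  sum_nonneg fun a _ => mul_nonneg (mul_nonneg (hπo0 _ _ a) hγ0) (Kbar_nonneg hK0 hw0 _ a s')

omit [Fintype O] in
theorem sum_discountedStep (hK1 : ∀ p s a, ∑ s', K p s a s' = 1) (hw1 : ∑ p, w p = 1)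
    (hπo1 : ∀ ω s, ∑ a, πo ω s a = 1) (x : S × O) : ∑ s', discountedStep w K γ πo x s' = γ := by
  simp only [discountedStep]
  rw [sum_comm]
  simp only [← mul_sum, sum_Kbar hK1 hw1, mul_one]
  rw [← sum_mul, hπo1, one_mul]

omit [Fintype S] [Fintype O] in
theorem Pgam_nonneg (hγ0 : 0 ≤ γ) (hK0 : ∀ p s a s', 0 ≤ K p s a s') (hw0 : ∀ p, 0 ≤ w p)
    (hπΩ0 : ∀ s ω, 0 ≤ πΩ s ω) (hπo0 : ∀ ω s a, 0 ≤ πo ω s a)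
    (hβ0 : ∀ ω s, 0 ≤ β ω s) (hβ1 : ∀ ω s, β ω s ≤ 1) (x y : S × O) :
    0 ≤ Pgam w K γ πo β πΩ x y := by
  rw [Pgam_eq_discountedStep_mul]
  have hcont : 0 ≤ (1 - β x.2 y.1) * (if y.2 = x.2 then 1 else 0) :=
    mul_nonneg (sub_nonneg.2 (hβ1 _ _)) (by split_ifs <;> norm_num)
  exact mul_nonneg (discountedStep_nonneg hγ0 hK0 hw0 hπo0 _ _)
    (add_nonneg hcont (mul_nonneg (hβ0 _ _) (hπΩ0 _ _)))

theorem sum_Pgam (hK1 : ∀ p s a, ∑ s', K p s a s' = 1) (hw1 : ∑ p, w p = 1)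
    (hπΩ1 : ∀ s, ∑ ω, πΩ s ω = 1) (hπo1 : ∀ ω s, ∑ a, πo ω s a = 1) (x : S × O) :
    ∑ y, Pgam w K γ πo β πΩ x y = γ := by
  have hone := Pgam_mulVec (w := w) (K := K) (γ := γ) (πo := πo) (β := β) (πΩ := πΩ) 1 x
  simpa only [mulVec, dotProduct, of_apply, Pi.one_apply, mul_one, hπΩ1, sub_add_cancel,
    sum_discountedStep hK1 hw1 hπo1] using hone

theorem summable_PgamIter (hγ0 : 0 ≤ γ) (hγ1 : γ < 1)
    (hK0 : ∀ p s a s', 0 ≤ K p s a s') (hK1 : ∀ p s a, ∑ s', K p s a s' = 1)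
    (hw0 : ∀ p, 0 ≤ w p) (hw1 : ∑ p, w p = 1)
    (hπΩ0 : ∀ s ω, 0 ≤ πΩ s ω) (hπΩ1 : ∀ s, ∑ ω, πΩ s ω = 1)
    (hπo0 : ∀ ω s a, 0 ≤ πo ω s a) (hπo1 : ∀ ω s, ∑ a, πo ω s a = 1)
    (hβ0 : ∀ ω s, 0 ≤ β ω s) (hβ1 : ∀ ω s, β ω s ≤ 1) (x y : S × O) :
    Summable fun k => PgamIter w K γ πo β πΩ k x y := by
  refine summable_Pgam_pow_iff.1 (summable_pow_of_sum_norm_le hγ0 hγ1 fun z => le_of_eq ?_) x y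
  simp only [of_apply, Real.norm_of_nonneg (Pgam_nonneg hγ0 hK0 hw0 hπΩ0 hπo0 hβ0 hβ1 _ _)]
  exact sum_Pgam hK1 hw1 hπΩ1 hπo1 z

end Kernel

namespace IsBellmanSolution

section Fixed

variable {γ : ℝ} {c : P → S → A → ℝ} {K : P → S → A → S → ℝ} {w : P → ℝ} {πΩ : S → O → ℝ}
  {πo : O → S → A → ℝ} {β β' : O → S → ℝ} {QΩ QΩ' : S → O → P → ℝ}
  {Qo Qo' : S → O → A → P → ℝ} {Qβ Qβ' : S → O → P → ℝ} {VΩ VΩ' : S → P → ℝ}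

theorem meanStateValue_eq (h : IsBellmanSolution γ c K w πΩ πo β QΩ Qo Qβ VΩ) (s : S) :
    meanStateValue w VΩ s = ∑ ω, πΩ s ω * meanOptionValue w QΩ (s, ω) := by
  simp only [meanStateValue, meanOptionValue, h.stateValue_eq, mul_sum]
  rw [sum_comm]
  simp only [mul_left_comm]

theorem mean_arrivalValue (h : IsBellmanSolution γ c K w πΩ πo β QΩ Qo Qβ VΩ) (s : S) (ω : O) :
    ∑ p, w p * Qβ s ω p =
      (1 - β ω s) * meanOptionValue w QΩ (s, ω) + β ω s * meanStateValue w VΩ s := by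
  simp only [meanStateValue, meanOptionValue, h.arrivalValue_eq, mul_add, sum_add_distrib,
    mul_sum, mul_left_comm]

theorem optionValue_eq_cost_add (h : IsBellmanSolution γ c K w πΩ πo β QΩ Qo Qβ VΩ)
    (s : S) (ω : O) (p : P) :
    QΩ s ω p = ∑ a, πo ω s a * c p s a + ∑ s', (∑ a, πo ω s a * γ * K p s a s') *
      ((1 - β ω s') * meanOptionValue w QΩ (s', ω) + β ω s' * meanStateValue w VΩ s') := by
  simp only [← h.mean_arrivalValue, h.optionValue_eq, h.actionValue_eq, mul_add, sum_add_distrib]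
  congr 1
  simp only [sum_mul]
  rw [sum_comm]
  refine sum_congr rfl fun a _ => ?_
  simp only [mul_sum, mul_assoc]

theorem meanOptionValue_eq_cost_add_mulVec (h : IsBellmanSolution γ c K w πΩ πo β QΩ Qo Qβ VΩ) :
    meanOptionValue w QΩ =
      meanOptionCost w c πo + of (Pgam w K γ πo β πΩ) *ᵥ meanOptionValue w QΩ := by
  ext ⟨s, ω⟩
  have hstep (s' : S) : discountedStep w K γ πo (s, ω) s' =
      ∑ p, w p * ∑ a, πo ω s a * γ * K p s a s' := by
    simp only [discountedStep, Kbar, mul_sum]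
    rw [sum_comm]
    simp only [mul_left_comm]
  rw [Pi.add_apply, Pgam_mulVec]
  simp only [← h.meanStateValue_eq, hstep, sum_mul]
  rw [sum_comm, meanOptionCost, ← sum_add_distrib, meanOptionValue]
  refine sum_congr rfl fun p _ => ?_
  rw [h.optionValue_eq_cost_add s ω p, mul_add, mul_sum (univ : Finset S)]
  simp only [mul_assoc]

/-- The termination counterpart of the performance difference lemma. It is exact, and its first
order part in `β'` around `β` is the termination gradient. -/
theorem meanOptionValue_sub (h : IsBellmanSolution γ c K w πΩ πo β QΩ Qo Qβ VΩ)
    (h' : IsBellmanSolution γ c K w πΩ πo β' QΩ' Qo' Qβ' VΩ')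
    (hsum : ∀ x y, Summable fun k => PgamIter w K γ πo β πΩ k x y) (x : S × O) :
    meanOptionValue w QΩ' x - meanOptionValue w QΩ x =
      ∑ q, shiftedOccupancy w K γ πo β πΩ x q * ((β' q.2 q.1 - β q.2 q.1) *
        (meanStateValue w VΩ' q.1 - meanOptionValue w QΩ' q)) := by
  have hdiff := fixedPoint_sub_eq_tsum_pow_mulVec (summable_Pgam_pow_iff.2 hsum)
    h.meanOptionValue_eq_cost_add_mulVec h'.meanOptionValue_eq_cost_add_mulVec
  rw [← Pi.sub_apply, hdiff, ← tsum_Pgam_pow_mulVec_discountedStep hsum]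
  congr 2
  ext z
  simp only [Pgam_sub_mulVec, h'.meanStateValue_eq]

end Fixed

section Family

variable {E : Type*} {γ : ℝ} {c : P → S → A → ℝ} {K : P → S → A → S → ℝ} {w : P → ℝ}
  {πΩ : S → O → ℝ} {πo : O → S → A → ℝ} {β : E → O → S → ℝ} {QΩ : E → S → O → P → ℝ}
  {Qo : E → S → O → A → P → ℝ} {Qβ : E → S → O → P → ℝ} {VΩ : E → S → P → ℝ} {θ₀ : E}

theorem continuousAt_meanOptionValue [TopologicalSpace E]
    (h : ∀ᶠ θ in 𝓝 θ₀, IsBellmanSolution γ c K w πΩ πo (β θ) (QΩ θ) (Qo θ) (Qβ θ) (VΩ θ))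
    (hsum : ∀ x y, Summable fun k => PgamIter w K γ πo (β θ₀) πΩ k x y)
    (hβ : ∀ ω s, ContinuousAt (fun θ => β θ ω s) θ₀) :
    ContinuousAt (fun θ => meanOptionValue w (QΩ θ)) θ₀ :=
  continuousAt_fixedPoint_of_isUnit_one_sub (continuousAt_Pgam hβ)
    (isUnit_one_sub_of_summable_pow (summable_Pgam_pow_iff.2 hsum))
    (h.mono fun _ hθ => hθ.meanOptionValue_eq_cost_add_mulVec)

variable [NormedAddCommGroup E] [NormedSpace ℝ E]

theorem hasFDerivAt_meanOptionValue
    (h : ∀ᶠ θ in 𝓝 θ₀, IsBellmanSolution γ c K w πΩ πo (β θ) (QΩ θ) (Qo θ) (Qβ θ) (VΩ θ))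
    (hsum : ∀ x y, Summable fun k => PgamIter w K γ πo (β θ₀) πΩ k x y)
    (hβ : ∀ ω s, DifferentiableAt ℝ (fun θ => β θ ω s) θ₀) (x : S × O) :
    HasFDerivAt (fun θ => meanOptionValue w (QΩ θ) x)
      (∑ q : S × O, (shiftedOccupancy w K γ πo (β θ₀) πΩ x q *
        (meanStateValue w (VΩ θ₀) q.1 - meanOptionValue w (QΩ θ₀) q)) •
          fderiv ℝ (fun θ => β θ q.2 q.1) θ₀) θ₀ := by
  have hQ : ∀ y, ContinuousAt (fun θ => meanOptionValue w (QΩ θ) y) θ₀ :=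
    continuousAt_pi.1 (continuousAt_meanOptionValue h hsum fun ω s => (hβ ω s).continuousAt)
  have hV (s : S) : ContinuousAt (fun θ => meanStateValue w (VΩ θ) s) θ₀ := by
    refine ContinuousAt.congr ?_ (h.mono fun _ hθ => (hθ.meanStateValue_eq s).symm)
    fun_prop
  have hdiff : (fun θ => meanOptionValue w (QΩ θ) x) =ᶠ[𝓝 θ₀] fun θ =>
      meanOptionValue w (QΩ θ₀) x + ∑ q : S × O, shiftedOccupancy w K γ πo (β θ₀) πΩ x q *
        ((β θ q.2 q.1 - β θ₀ q.2 q.1) *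
          (meanStateValue w (VΩ θ) q.1 - meanOptionValue w (QΩ θ) q)) :=
    h.mono fun θ hθ => eq_add_of_sub_eq' (h.self_of_nhds.meanOptionValue_sub hθ hsum x)
  refine HasFDerivAt.congr_of_eventuallyEq (.const_add _ (.fun_sum fun q _ => ?_)) hdiff
  rw [mul_smul]
  exact (hasFDerivAt_sub_mul_of_continuousAt (hβ q.2 q.1).hasFDerivAt
    ((hV q.1).sub (hQ q))).const_mul _

theorem differentiableAt_optionValue
    (h : ∀ᶠ θ in 𝓝 θ₀, IsBellmanSolution γ c K w πΩ πo (β θ) (QΩ θ) (Qo θ) (Qβ θ) (VΩ θ))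
    (hsum : ∀ x y, Summable fun k => PgamIter w K γ πo (β θ₀) πΩ k x y)
    (hβ : ∀ ω s, DifferentiableAt ℝ (fun θ => β θ ω s) θ₀) (s : S) (ω : O) (p : P) :
    DifferentiableAt ℝ (fun θ => QΩ θ s ω p) θ₀ := by
  have hQ (x : S × O) : DifferentiableAt ℝ (fun θ => meanOptionValue w (QΩ θ) x) θ₀ :=
    (hasFDerivAt_meanOptionValue h hsum hβ x).differentiableAt
  have hexpand : (fun θ => QΩ θ s ω p) =ᶠ[𝓝 θ₀] fun θ => ∑ a, πo ω s a * c p s a +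
      ∑ s', (∑ a, πo ω s a * γ * K p s a s') * ((1 - β θ ω s') * meanOptionValue w (QΩ θ) (s', ω) +
        β θ ω s' * ∑ ω', πΩ s' ω' * meanOptionValue w (QΩ θ) (s', ω')) :=
    h.mono fun θ hθ => by
      simpa only [hθ.meanStateValue_eq] using hθ.optionValue_eq_cost_add s ω p
  refine DifferentiableAt.congr_of_eventuallyEq ?_ hexpand
  fun_prop

end Family

end IsBellmanSolution

theorem termination_gradient_soft_robust_general
    {E : Type*} [NormedAddCommGroup E] [NormedSpace ℝ E]
    (γ : ℝ) (c : P → S → A → ℝ) (K : P → S → A → S → ℝ) (w : P → ℝ)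
    (πΩ : S → O → ℝ) (πo : O → S → A → ℝ) (β : E → O → S → ℝ)
    (QΩ : E → S → O → P → ℝ) (Qo : E → S → O → A → P → ℝ)
    (Qβ : E → S → O → P → ℝ) (VΩ : E → S → P → ℝ) (θ₀ : E)
    (hBellman : ∀ᶠ θ in 𝓝 θ₀,
      IsBellmanSolution γ c K w πΩ πo (β θ) (QΩ θ) (Qo θ) (Qβ θ) (VΩ θ))
    (hsum : ∀ x y, Summable fun k => PgamIter w K γ πo (β θ₀) πΩ k x y)
    (hdβ : ∀ ω s, DifferentiableAt ℝ (fun θ => β θ ω s) θ₀) (s₀ : S) (ω₀ : O) :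
    (∀ p, DifferentiableAt ℝ (fun θ => QΩ θ s₀ ω₀ p) θ₀) ∧
    ∑ p, w p • fderiv ℝ (fun θ => QΩ θ s₀ ω₀ p) θ₀ =
      ∑ q : S × O, (shiftedOccupancy w K γ πo (β θ₀) πΩ (s₀, ω₀) q *
        (meanStateValue w (VΩ θ₀) q.1 - meanOptionValue w (QΩ θ₀) q)) •
          fderiv ℝ (fun θ => β θ q.2 q.1) θ₀ := by
  have hdQ := IsBellmanSolution.differentiableAt_optionValue hBellman hsum hdβ s₀ ω₀
  have hmean : HasFDerivAt (fun θ => meanOptionValue w (QΩ θ) (s₀, ω₀))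
      (∑ p, w p • fderiv ℝ (fun θ => QΩ θ s₀ ω₀ p) θ₀) θ₀ :=
    .fun_sum fun p _ => (hdQ p).hasFDerivAt.const_mul (w p)
  exact ⟨hdQ, hmean.unique
    (IsBellmanSolution.hasFDerivAt_meanOptionValue hBellman hsum hdβ (s₀, ω₀))⟩

/-- Termination function gradient theorem for the soft robust loss (Theorem 3). -/
theorem termination_gradient_soft_robust
    [Nonempty S] [Nonempty O] [Nonempty A] [Nonempty P]
    (γ : ℝ) (hγ0 : 0 ≤ γ) (hγ1 : γ < 1)
    (c : S → A → ℝ)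
    (K : P → S → A → S → ℝ)
    (hK0 : ∀ p s a s', 0 ≤ K p s a s') (hK1 : ∀ p s a, ∑ s', K p s a s' = 1)
    (w : P → ℝ) (hw0 : ∀ p, 0 ≤ w p) (hw1 : ∑ p, w p = 1)
    (πΩ : S → O → ℝ)
    (hπΩ0 : ∀ s ω, 0 ≤ πΩ s ω) (hπΩ1 : ∀ s, ∑ ω, πΩ s ω = 1)
    (πo : O → S → A → ℝ)
    (hπo0 : ∀ ω s a, 0 ≤ πo ω s a) (hπo1 : ∀ ω s, ∑ a, πo ω s a = 1)
    (β : ℝ → O → S → ℝ) (hβ0 : ∀ θ ω s, 0 ≤ β θ ω s) (hβ1 : ∀ θ ω s, β θ ω s ≤ 1)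
    (QΩ : ℝ → S → O → P → ℝ) (Qo : ℝ → S → O → A → P → ℝ)
    (Qβ : ℝ → S → O → P → ℝ) (VΩ : ℝ → S → P → ℝ)
    (hQΩ : ∀ θ s ω p, QΩ θ s ω p = ∑ a, πo ω s a * Qo θ s ω a p)
    (hQo : ∀ θ s ω a p,
      Qo θ s ω a p = c s a + γ * ∑ s', K p s a s' * (∑ p', w p' * Qβ θ s' ω p'))
    (hQβ : ∀ θ s ω p, Qβ θ s ω p = (1 - β θ ω s) * QΩ θ s ω p + β θ ω s * VΩ θ s p)
    (hVΩ : ∀ θ s p, VΩ θ s p = ∑ ω, πΩ s ω * QΩ θ s ω p)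
    (θ₀ : ℝ)
    (hdβ : ∀ ω s, DifferentiableAt ℝ (fun θ => β θ ω s) θ₀)
    (hdQ : ∀ s ω p, DifferentiableAt ℝ (fun θ => QΩ θ s ω p) θ₀)
    (s₀ : S) (ω₀ : O) :
    ∑ p, w p * deriv (fun θ => QΩ θ s₀ ω₀ p) θ₀ =
      ∑ q : S × O,
        (∑' k : ℕ, ∑ s', PgamIter w K γ πo (β θ₀) πΩ k (s₀, ω₀) (s', q.2) *
            ∑ a, πo q.2 s' a * γ * Kbar w K s' a q.1) *
          (deriv (fun θ => β θ q.2 q.1) θ₀) *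
          ((∑ p, w p * VΩ θ₀ q.1 p) - (∑ p, w p * QΩ θ₀ q.1 q.2 p)) := by
  have hsum := summable_PgamIter hγ0 hγ1 hK0 hK1 hw0 hw1 hπΩ0 hπΩ1 hπo0 hπo1 (hβ0 θ₀) (hβ1 θ₀)
  have hgrad := (termination_gradient_soft_robust_general γ (fun _ => c) K w πΩ πo β QΩ Qo Qβ VΩ θ₀
    (.of_forall fun θ => ⟨hQΩ θ, hQo θ, hQβ θ, hVΩ θ⟩) hsum hdβ s₀ ω₀).2
  have hderiv := DFunLike.congr_fun hgrad 1
  simp only [_root_.sum_apply, _root_.smul_apply, smul_eq_mul,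
    fderiv_apply_one_eq_deriv] at hderiv
  exact hderiv.trans (sum_congr rfl fun q _ => mul_right_comm _ _ _)
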